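/- For every n ≥ 3 and every edge e of the cycle C_n, γ_g(C_n) = γ_g(C_n − e); that is, γ_g of a cycle equals γ_g of the path on the same number of vertices. -/

import Mathlib

open Classical

noncomputable section

namespace DomGame

variable {V : Type*} [Fintype V]

/-- Closed neighborhood of `v` as a `Finset`. -/
noncomputable def N (G : SimpleGraph V) (v : V) : Finset V :=
  Finset.univ.filter (fun u => G.Adj v u ∨ u = v)

/-- Legal moves given the set `S` of already dominated vertices. -/
noncomputable def moves (G : SimpleGraph V) (S : Finset V) : Finset V :=
  Finset.univ.filter (fun v => ¬ N G v ⊆ S)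

lemma card_lt {G : SimpleGraph V} {S : Finset V} (v : V) (hv : v ∈ moves G S) :
    (Finset.univ \ (S ∪ N G v)).card < (Finset.univ \ S).card := by
  simp only [moves, Finset.mem_filter] at hv
  obtain ⟨u, hu, hus⟩ := Finset.not_subset.mp hv.2
  apply Finset.card_lt_card
  refine ⟨Finset.sdiff_subset_sdiff (le_refl _) Finset.subset_union_left, ?_⟩
  intro hsub
  have := hsub (Finset.mem_sdiff.mpr ⟨Finset.mem_univ u, hus⟩)
  rw [Finset.mem_sdiff, Finset.mem_union] at this
  exact this.2 (Or.inr hu)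

mutual
/-- Number of moves with optimal play when it is Dominator's turn and
`S` is the set of already dominated vertices. -/
noncomputable def gameD (G : SimpleGraph V) (S : Finset V) : ℕ :=
  if h : (moves G S).Nonempty then
    1 + (moves G S).attach.inf' (by simpa using h)
      (fun v => gameS G (S ∪ N G v.1))
  else 0
termination_by (Finset.univ \ S).card
decreasing_by exact card_lt v.1 v.2

/-- Number of moves with optimal play when it is Staller's turn. -/
noncomputable def gameS (G : SimpleGraph V) (S : Finset V) : ℕ :=
  if h : (moves G S).Nonempty then
    1 + (moves G S).attach.sup' (by simpa using h)
      (fun v => gameD G (S ∪ N G v.1))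
  else 0
termination_by (Finset.univ \ S).card
decreasing_by exact card_lt v.1 v.2
end

/-- The (Dominator-start) game domination number. -/
noncomputable def gammaG (G : SimpleGraph V) : ℕ := gameD G ∅

/-- The Staller-start game domination number. -/
noncomputable def gammaG' (G : SimpleGraph V) : ℕ := gameS G ∅

end DomGame

/-!
Both `C_n` and `P_n` have game domination number `⌈n / 4⌉ + ⌊n / 4⌋`.

*Lower bound.* In a connected graph of maximum degree at most two, Staller can always play on the
boundary of the dominated region and thereby dominate a single new vertex. As Dominator dominates
at most three, each pair of moves uses up at most four vertices.

*Upper bound.* On a path, a run of `k` consecutive undominated vertices is given the weight `4`,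
`6`, `7`, `8`, `12`, … (for `k = 1, 2, 3, 4, 5, …`), in quarters of a move. Every move of Staller
lowers the total weight by at least `1`. Dominator, by taking three vertices at the end of a
suitable run, lowers it by `7`, or by less in positions where divisibility of the total weight
makes up for the difference; so two moves use up eight quarters. On a cycle, edges between
dominated vertices have no influence on the game, so once Dominator has played an arbitrary first
vertex the players are facing a path with one run of `n - 3` vertices.
-/

namespace DomGame

open SimpleGraph

section Game

variable {V W : Type*} [Fintype V] [Fintype W] {G : SimpleGraph V} {H : SimpleGraph W}
  {S : Finset V} {T : Finset W} {u v : V} {b : ℕ}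

lemma mem_N : u ∈ N G v ↔ G.Adj v u ∨ u = v := by
  simp [N]

lemma self_mem_N : v ∈ N G v :=
  mem_N.2 (Or.inr rfl)

lemma card_N [G.LocallyFinite] (v : V) : (N G v).card = G.degree v + 1 := by
  have hN : N G v = insert v (G.neighborFinset v) := by
    ext u
    simp [mem_N, or_comm]
  rw [hN, Finset.card_insert_of_notMem (by simp), card_neighborFinset_eq_degree]

lemma mem_moves : v ∈ moves G S ↔ ∃ u ∈ N G v, u ∉ S := by
  simp [moves, Finset.not_subset]

lemma mem_moves_of_notMem (hv : v ∉ S) : v ∈ moves G S :=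
  mem_moves.2 ⟨v, self_mem_N, hv⟩

lemma gameD_eq_zero (h : moves G S = ∅) : gameD G S = 0 := by
  rw [gameD, dif_neg (Finset.not_nonempty_iff_eq_empty.2 h)]

lemma gameD_le (hv : v ∈ moves G S) : gameD G S ≤ 1 + gameS G (S ∪ N G v) := by
  rw [gameD, dif_pos ⟨v, hv⟩]
  gcongr
  exact Finset.inf'_le (fun v : moves G S ↦ gameS G (S ∪ N G v.1)) (Finset.mem_attach _ ⟨v, hv⟩)

lemma le_gameD (hne : (moves G S).Nonempty)
    (h : ∀ v ∈ moves G S, b ≤ 1 + gameS G (S ∪ N G v)) : b ≤ gameD G S := by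
  rw [gameD, dif_pos hne]
  obtain ⟨v, -, hv⟩ := Finset.exists_mem_eq_inf' (Finset.attach_nonempty_iff.2 hne)
    (fun v : moves G S ↦ gameS G (S ∪ N G v.1))
  rw [hv]
  exact h v.1 v.2

lemma le_gameS (hv : v ∈ moves G S) : 1 + gameD G (S ∪ N G v) ≤ gameS G S := by
  rw [gameS, dif_pos ⟨v, hv⟩]
  gcongr
  exact Finset.le_sup' (fun v : moves G S ↦ gameD G (S ∪ N G v.1)) (Finset.mem_attach _ ⟨v, hv⟩)

lemma gameS_le (h : ∀ v ∈ moves G S, 1 + gameD G (S ∪ N G v) ≤ b) : gameS G S ≤ b := by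
  rw [gameS]
  split_ifs with hne
  · obtain ⟨v, -, hv⟩ := Finset.exists_mem_eq_sup' (Finset.attach_nonempty_iff.2 hne)
      (fun v : moves G S ↦ gameD G (S ∪ N G v.1))
    rw [hv]
    exact h v.1 v.2
  · exact b.zero_le

/-- Edges between dominated vertices have no influence on the rest of the game. -/
lemma game_le_game_of_equiv (f : V ≃ W) (hS : ∀ u, f u ∈ T ↔ u ∈ S)
    (hf : ∀ u ∉ S, ∀ v, H.Adj (f u) (f v) ↔ G.Adj u v) :
    gameD G S ≤ gameD H T ∧ gameS G S ≤ gameS H T := by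
  induction hm : (Finset.univ \ S).card using Nat.strong_induction_on generalizing S T with
  | _ m ih =>
    have mem_N_iff : ∀ u ∉ S, ∀ v, f u ∈ N H (f v) ↔ u ∈ N G v := fun u hu v ↦ by
      rw [mem_N, mem_N, adj_comm, hf u hu, adj_comm, f.injective.eq_iff]
    have mem_moves_iff (v : V) : f v ∈ moves H T ↔ v ∈ moves G S := by
      rw [mem_moves, mem_moves]
      refine (f.exists_congr fun u ↦ ?_).symm
      rw [hS]
      exact and_congr_left fun hu ↦ (mem_N_iff u hu v).symm
    have next (v : V) (hv : v ∈ moves G S) := by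
      refine ih _ (hm ▸ card_lt v hv) (S := S ∪ N G v) (T := T ∪ N H (f v)) (fun u ↦ ?_)
        (fun u hu ↦ hf u fun h ↦ hu (Finset.mem_union_left _ h)) rfl
      by_cases hu : u ∈ S
      · simp [hS, hu]
      · simp [hS, hu, mem_N_iff u hu v]
    constructor
    · rcases (moves G S).eq_empty_or_nonempty with h | ⟨v, hv⟩
      · simp [gameD_eq_zero h]
      · refine le_gameD ⟨f v, (mem_moves_iff v).2 hv⟩ fun w hw ↦ ?_
        obtain ⟨v, rfl⟩ := f.surjective w
        have hv := (mem_moves_iff v).1 hw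
        exact (gameD_le hv).trans (Nat.add_le_add_left (next v hv).2 1)
    · exact gameS_le fun v hv ↦
        (Nat.add_le_add_left (next v hv).1 1).trans (le_gameS ((mem_moves_iff v).2 hv))

lemma gammaG_congr (f : G ≃g H) : gammaG G = gammaG H :=
  le_antisymm (game_le_game_of_equiv f.toEquiv (by simp) fun _ _ _ ↦ f.map_adj_iff).1
    (game_le_game_of_equiv f.symm.toEquiv (by simp) fun _ _ _ ↦ f.symm.map_adj_iff).1

lemma gameS_congr {G' : SimpleGraph V} (h : ∀ u ∉ S, ∀ v, G.Adj u v ↔ G'.Adj u v) :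
    gameS G S = gameS G' S :=
  le_antisymm (game_le_game_of_equiv (.refl V) (by simp) fun u hu v ↦ (h u hu v).symm).2
    (game_le_game_of_equiv (.refl V) (by simp) h).2

/-- `P S w` is read as: `w` is a potential of the position `S`, in units of `1 / d` of a move. -/
lemma game_le_of_potential {d : ℕ} (hd : 0 < d) (P : Finset V → ℕ → Prop)
    (hS : ∀ S w, P S w → ∀ v ∈ moves G S, ∃ w' < w, P (S ∪ N G v) w')
    (hD : ∀ S w, P S w → (moves G S).Nonempty →
      ∃ v ∈ moves G S, ∃ w', w' ⌈/⌉ d < w / d ∧ P (S ∪ N G v) w')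
    {S : Finset V} {w : ℕ} (hw : P S w) : gameD G S ≤ w / d ∧ gameS G S ≤ w ⌈/⌉ d := by
  induction hm : (Finset.univ \ S).card using Nat.strong_induction_on generalizing S w with
  | _ m ih =>
    constructor
    · rcases (moves G S).eq_empty_or_nonempty with h | h
      · simp [gameD_eq_zero h]
      · obtain ⟨v, hv, w', hlt, hw'⟩ := hD S w hw h
        have hS' := (ih _ (hm ▸ card_lt v hv) hw' rfl).2
        have hD' := gameD_le hv
        omega
    · refine gameS_le fun v hv ↦ ?_
      obtain ⟨w', hlt, hw'⟩ := hS S w hw v hv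
      have hD' := (ih _ (hm ▸ card_lt v hv) hw' rfl).1
      have hdrop : w' / d < w ⌈/⌉ d := by
        rw [Nat.div_lt_iff_lt_mul hd, mul_comm]
        exact hlt.trans_le (le_smul_ceilDiv hd)
      omega

end Game

section LowerBound

variable {V : Type*} [Fintype V] {G : SimpleGraph V}

lemma card_compl_union_add_card_sdiff (S A : Finset V) :
    (S ∪ A)ᶜ.card + (A \ S).card = Sᶜ.card := by
  rw [← Finset.card_union_of_disjoint]
  · congr 1
    ext x
    simp only [Finset.mem_union, Finset.mem_compl, Finset.mem_sdiff]
    tauto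
  · exact Finset.disjoint_left.2 fun x hx hx' ↦ by simp_all

lemma exists_adj_of_mem_of_notMem (hG : G.Preconnected) {S : Finset V} (hS : S.Nonempty)
    (hS' : Sᶜ.Nonempty) : ∃ u ∈ S, ∃ v ∉ S, G.Adj u v := by
  obtain ⟨u, hu⟩ := hS
  obtain ⟨v, hv⟩ := hS'
  obtain ⟨p⟩ := hG u v
  obtain ⟨d, -, hfst, hsnd⟩ := p.exists_boundary_dart S hu (Finset.mem_compl.1 hv)
  exact ⟨d.fst, hfst, d.snd, hsnd, d.adj⟩

variable [G.LocallyFinite]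

/-- Playing on the boundary of the dominated region: a dominated vertex shares its closed
neighborhood with the vertex that dominates it, which leaves room for one new vertex only. -/
lemma exists_card_N_sdiff_eq_one (hG : G.Preconnected) (hdeg : ∀ v, G.degree v ≤ 2)
    {D : Finset V} (hD : D.Nonempty) (hne : (D.biUnion (N G))ᶜ.Nonempty) :
    ∃ v ∈ moves G (D.biUnion (N G)), (N G v \ D.biUnion (N G)).card = 1 := by
  set S := D.biUnion (N G)
  have hSne : S.Nonempty := hD.imp fun w hw ↦ Finset.mem_biUnion.2 ⟨w, hw, self_mem_N⟩
  obtain ⟨u, huS, x, hxS, hux⟩ := exists_adj_of_mem_of_notMem hG hSne hne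
  have hxN : x ∈ N G u := mem_N.2 (Or.inl hux)
  obtain ⟨w, hwD, huw⟩ := Finset.mem_biUnion.1 huS
  have hwS : N G w ⊆ S := Finset.subset_biUnion_of_mem _ hwD
  have huw_ne : u ≠ w := fun h ↦ hxS (hwS (h ▸ hxN))
  have hwN : w ∈ N G u := mem_N.2 (Or.inl ((mem_N.1 huw).resolve_right huw_ne).symm)
  have hsub : N G u \ S ⊆ N G u \ {u, w} :=
    Finset.sdiff_subset_sdiff le_rfl
      (Finset.insert_subset huS (Finset.singleton_subset_iff.2 (hwS self_mem_N)))
  have hcard : (N G u \ {u, w}).card ≤ 1 := by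
    rw [Finset.card_sdiff_of_subset
      (Finset.insert_subset self_mem_N (Finset.singleton_subset_iff.2 hwN)),
      Finset.card_pair huw_ne, card_N]
    have := hdeg u
    omega
  refine ⟨u, mem_moves.2 ⟨x, hxN, hxS⟩, le_antisymm ((Finset.card_le_card hsub).trans hcard) ?_⟩
  exact Finset.card_pos.2 ⟨x, Finset.mem_sdiff.2 ⟨hxN, hxS⟩⟩

lemma ceilDiv_add_div_le_gameD (hG : G.Preconnected) (hdeg : ∀ v, G.degree v ≤ 2)
    (D : Finset V) {m : ℕ} (hm : (D.biUnion (N G))ᶜ.card = m) :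
    m ⌈/⌉ 4 + m / 4 ≤ gameD G (D.biUnion (N G)) := by
  induction m using Nat.strong_induction_on generalizing D with
  | _ m ih =>
    have play (D : Finset V) (v : V) : D.biUnion (N G) ∪ N G v = (insert v D).biUnion (N G) := by
      rw [Finset.biUnion_insert, Finset.union_comm]
    rcases (D.biUnion (N G))ᶜ.eq_empty_or_nonempty with h | ⟨x, hx⟩
    · simp [← hm, h]
    refine le_gameD ⟨x, mem_moves_of_notMem (Finset.mem_compl.1 hx)⟩ fun v _ ↦ ?_
    have hdom := card_compl_union_add_card_sdiff (D.biUnion (N G)) (N G v)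
    have hnew : (N G v \ D.biUnion (N G)).card ≤ 3 :=
      (Finset.card_le_card Finset.sdiff_subset).trans (by rw [card_N]; have := hdeg v; omega)
    rw [play] at hdom ⊢
    rcases ((insert v D).biUnion (N G))ᶜ.eq_empty_or_nonempty with h | h
    · rw [h, Finset.card_empty] at hdom
      rw [Nat.ceilDiv_eq_add_pred_div]
      omega
    obtain ⟨u, hu, hone⟩ := exists_card_N_sdiff_eq_one hG hdeg (D.insert_nonempty v) h
    have hstall := card_compl_union_add_card_sdiff ((insert v D).biUnion (N G)) (N G u)
    have hS := le_gameS hu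
    rw [play] at hstall hS
    have hrec := ih _ (by omega) (insert u (insert v D)) rfl
    rw [Nat.ceilDiv_eq_add_pred_div] at hrec ⊢
    omega

theorem card_ceilDiv_add_div_le_gammaG (hG : G.Preconnected) (hdeg : ∀ v, G.degree v ≤ 2) :
    Fintype.card V ⌈/⌉ 4 + Fintype.card V / 4 ≤ gammaG G := by
  simpa [gammaG] using ceilDiv_add_div_le_gameD hG hdeg ∅ rfl

end LowerBound

section Runs

/-- The potential, in quarters of a move, of a run of `k` consecutive undominated vertices of a
path. Lengthening the run by one adds `4, 2, 1, 1, 4, 2, 1, 1, …`. -/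
def runWeight (k : ℕ) : ℕ :=
  4 * ((k + 3) / 4) + 2 * ((k + 2) / 4) + (k + 1) / 4 + k / 4

@[simp]
lemma runWeight_zero : runWeight 0 = 0 := rfl

lemma runWeight_strictMono : StrictMono runWeight :=
  strictMono_nat_of_lt_succ fun k ↦ by
    unfold runWeight
    omega

lemma two_mul_le_runWeight (k : ℕ) : 2 * k ≤ runWeight k := by
  unfold runWeight
  omega

lemma runWeight_le_two_mul_add (k : ℕ) : runWeight k ≤ 2 * k + 2 := by
  unfold runWeight
  omega

lemma runWeight_add_lt {k l r : ℕ} (h : l + r + 3 ≤ k) :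
    runWeight l + runWeight r < runWeight k := by
  have hl := runWeight_le_two_mul_add l
  have hr := runWeight_le_two_mul_add r
  have hk := two_mul_le_runWeight k
  omega

lemma runWeight_sub_three_add_four_le {k : ℕ} (hk : 0 < k) :
    runWeight (k - 3) + 4 ≤ runWeight k := by
  unfold runWeight
  omega

lemma runWeight_sub_three_add_six_le {k : ℕ} (hk : k % 4 = 2) :
    runWeight (k - 3) + 6 ≤ runWeight k := by
  unfold runWeight
  omega

lemma runWeight_sub_three_add_seven_le {k : ℕ} (hk : k % 4 = 3) :
    runWeight (k - 3) + 7 ≤ runWeight k := by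
  unfold runWeight
  omega

/-- Total potential of a family of runs, the pair `(a, b)` standing for the run
`a, a + 1, …, b - 1`. -/
def totalWeight (R : Multiset (ℕ × ℕ)) : ℕ :=
  (R.map fun p ↦ runWeight (p.2 - p.1)).sum

/-- What is left of the run `p`, to the left and to the right, when the vertex `x` of the path is
played. Either part may be empty. -/
def splitRun (x : ℕ) (p : ℕ × ℕ) : Multiset (ℕ × ℕ) :=
  {(p.1, min p.2 (x - 1)), (max p.1 (x + 2), p.2)}

variable {R : Multiset (ℕ × ℕ)} {p : ℕ × ℕ} {x : ℕ}

lemma mem_splitRun_iff {y : ℕ} : (∃ q ∈ splitRun x p, q.1 ≤ y ∧ y < q.2) ↔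
    (p.1 ≤ y ∧ y < p.2) ∧ ¬ (y ≤ x + 1 ∧ x ≤ y + 1) := by
  simp only [splitRun, Multiset.insert_eq_cons, Multiset.mem_cons, Multiset.mem_singleton,
    exists_eq_or_imp, exists_eq_left]
  omega

lemma totalWeight_splitRun : totalWeight (splitRun x p) =
    runWeight (min p.2 (x - 1) - p.1) + runWeight (p.2 - max p.1 (x + 2)) := by
  simp [totalWeight, splitRun]

lemma totalWeight_splitRun_le : totalWeight (splitRun x p) ≤ runWeight (p.2 - p.1) := by
  rw [totalWeight_splitRun]
  generalize hl : min p.2 (x - 1) - p.1 = l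
  generalize hr : p.2 - max p.1 (x + 2) = r
  have hcases : l = 0 ∧ r ≤ p.2 - p.1 ∨ r = 0 ∧ l ≤ p.2 - p.1 ∨ l + r + 3 ≤ p.2 - p.1 := by omega
  rcases hcases with ⟨rfl, h⟩ | ⟨rfl, h⟩ | h
  · simpa using runWeight_strictMono.monotone h
  · simpa using runWeight_strictMono.monotone h
  · exact (runWeight_add_lt h).le

lemma totalWeight_splitRun_lt {y : ℕ} (hy : p.1 ≤ y ∧ y < p.2) (hyx : y ≤ x + 1 ∧ x ≤ y + 1) :
    totalWeight (splitRun x p) < runWeight (p.2 - p.1) := by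
  rw [totalWeight_splitRun]
  generalize hl : min p.2 (x - 1) - p.1 = l
  generalize hr : p.2 - max p.1 (x + 2) = r
  have hcases : l = 0 ∧ r < p.2 - p.1 ∨ r = 0 ∧ l < p.2 - p.1 ∨ l + r + 3 ≤ p.2 - p.1 := by omega
  rcases hcases with ⟨rfl, h⟩ | ⟨rfl, h⟩ | h
  · simpa using runWeight_strictMono h
  · simpa using runWeight_strictMono h
  · exact runWeight_add_lt h

lemma totalWeight_splitRun_min (h : p.1 < p.2) :
    totalWeight (splitRun (min (p.1 + 1) (p.2 - 1)) p) = runWeight (p.2 - p.1 - 3) := by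
  rw [totalWeight_splitRun, show min p.2 (min (p.1 + 1) (p.2 - 1) - 1) - p.1 = 0 by omega,
    show p.2 - max p.1 (min (p.1 + 1) (p.2 - 1) + 2) = p.2 - p.1 - 3 by omega]
  simp [runWeight]

lemma totalWeight_bind_splitRun_add_le (hp : p ∈ R) {c : ℕ}
    (hc : totalWeight (splitRun x p) + c ≤ runWeight (p.2 - p.1)) :
    totalWeight (R.bind (splitRun x)) + c ≤ totalWeight R := by
  have hbind (R : Multiset (ℕ × ℕ)) :
      totalWeight (R.bind (splitRun x)) = (R.map fun q ↦ totalWeight (splitRun x q)).sum := by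
    simp [totalWeight, Multiset.map_bind, Multiset.sum_bind]
  obtain ⟨R, rfl⟩ := Multiset.exists_cons_of_mem hp
  have hrest : (R.map fun q ↦ totalWeight (splitRun x q)).sum ≤ totalWeight R :=
    Multiset.sum_map_le_sum_map _ _ fun _ _ ↦ totalWeight_splitRun_le
  rw [hbind, totalWeight, Multiset.map_cons, Multiset.map_cons, Multiset.sum_cons,
    Multiset.sum_cons, ← totalWeight]
  omega

lemma dvd_totalWeight {d : ℕ} (h : ∀ p ∈ R, d ∣ runWeight (p.2 - p.1)) : d ∣ totalWeight R :=
  Multiset.dvd_sum fun _ hx ↦ by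
    obtain ⟨p, hp, rfl⟩ := Multiset.mem_map.1 hx
    exact h p hp

/-- Dominator takes three vertices at the end of a run whose length has the largest possible
residue modulo `4`. This gains `7`, `6` or `4` for the residues `3`, `2`, `≤ 1`, and in the last
two cases the total is a multiple of `2`, respectively of `4`. -/
lemma exists_totalWeight_bind_splitRun_ceilDiv_lt (hR : ∃ p ∈ R, p.1 < p.2) :
    ∃ p ∈ R, ∃ x, p.1 ≤ x ∧ x < p.2 ∧
      totalWeight (R.bind (splitRun x)) ⌈/⌉ 4 < totalWeight R / 4 := by
  suffices h : ∃ p ∈ R, p.1 < p.2 ∧ ∃ c, runWeight (p.2 - p.1 - 3) + c ≤ runWeight (p.2 - p.1) ∧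
      ∀ w, w + c ≤ totalWeight R → w ⌈/⌉ 4 < totalWeight R / 4 by
    obtain ⟨p, hp, hlt, c, hc, hw⟩ := h
    rw [← totalWeight_splitRun_min hlt] at hc
    exact ⟨p, hp, min (p.1 + 1) (p.2 - 1), by omega, by omega,
      hw _ (totalWeight_bind_splitRun_add_le hp hc)⟩
  simp only [Nat.ceilDiv_eq_add_pred_div]
  by_cases h3 : ∃ p ∈ R, (p.2 - p.1) % 4 = 3
  · obtain ⟨p, hp, hp3⟩ := h3
    exact ⟨p, hp, by omega, 7, runWeight_sub_three_add_seven_le hp3, by omega⟩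
  by_cases h2 : ∃ p ∈ R, (p.2 - p.1) % 4 = 2
  · have heven : 2 ∣ totalWeight R := dvd_totalWeight fun p hp ↦ by
      have : (p.2 - p.1) % 4 ≠ 3 := fun h ↦ h3 ⟨p, hp, h⟩
      unfold runWeight
      omega
    obtain ⟨p, hp, hp2⟩ := h2
    exact ⟨p, hp, by omega, 6, runWeight_sub_three_add_six_le hp2, by omega⟩
  · have hfour : 4 ∣ totalWeight R := dvd_totalWeight fun p hp ↦ by
      have : (p.2 - p.1) % 4 ≠ 3 := fun h ↦ h3 ⟨p, hp, h⟩
      have : (p.2 - p.1) % 4 ≠ 2 := fun h ↦ h2 ⟨p, hp, h⟩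
      unfold runWeight
      omega
    obtain ⟨p, hp, hlt⟩ := hR
    exact ⟨p, hp, hlt, 4, runWeight_sub_three_add_four_le (Nat.sub_pos_of_lt hlt), by omega⟩

end Runs

section Path

variable {n : ℕ} {S : Finset (Fin n)} {R : Multiset (ℕ × ℕ)} {u v : Fin n}

lemma mem_N_pathGraph : u ∈ N (pathGraph n) v ↔ u.1 ≤ v.1 + 1 ∧ v.1 ≤ u.1 + 1 := by
  rw [mem_N, pathGraph_adj, Fin.ext_iff]
  omega

/-- The undominated vertices are exactly those in the runs of `R`, which are allowed to overlap. -/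
def IsRunCover (S : Finset (Fin n)) (R : Multiset (ℕ × ℕ)) : Prop :=
  ∀ y, (∃ p ∈ R, p.1 ≤ y ∧ y < p.2) ↔ ∃ hy : y < n, (⟨y, hy⟩ : Fin n) ∉ S

lemma IsRunCover.notMem_iff (hR : IsRunCover S R) :
    u ∉ S ↔ ∃ p ∈ R, p.1 ≤ u.1 ∧ u.1 < p.2 := by
  simp [hR u.1]

/-- The decidability instance is a free variable because the game uses the classical one, which is
not the one that instance search finds on `Fin n`. -/
lemma IsRunCover.bind_splitRun {_ : DecidableEq (Fin n)} (hR : IsRunCover S R) (v : Fin n) :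
    IsRunCover (S ∪ N (pathGraph n) v) (R.bind (splitRun v)) := fun y ↦ by
  calc (∃ q ∈ R.bind (splitRun v), q.1 ≤ y ∧ y < q.2)
    _ ↔ ∃ p ∈ R, ∃ q ∈ splitRun v p, q.1 ≤ y ∧ y < q.2 := by
      simp only [Multiset.mem_bind]
      tauto
    _ ↔ (∃ p ∈ R, p.1 ≤ y ∧ y < p.2) ∧ ¬ (y ≤ v.1 + 1 ∧ v.1 ≤ y + 1) := by
      simp only [mem_splitRun_iff, ← exists_and_right, and_assoc]
    _ ↔ ∃ hy : y < n, (⟨y, hy⟩ : Fin n) ∉ S ∪ N (pathGraph n) v := by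
      rw [hR y]
      simp only [Finset.mem_union, mem_N_pathGraph, not_or, ← exists_and_right]

lemma game_pathGraph_le (hR : IsRunCover S R) :
    gameD (pathGraph n) S ≤ totalWeight R / 4 ∧
      gameS (pathGraph n) S ≤ totalWeight R ⌈/⌉ 4 := by
  refine game_le_of_potential four_pos (fun S w ↦ ∃ R, IsRunCover S R ∧ totalWeight R = w)
    ?_ ?_ ⟨R, hR, rfl⟩
  · rintro S _ ⟨R, hR, rfl⟩ v hv
    obtain ⟨u, huv, hu⟩ := mem_moves.1 hv
    obtain ⟨p, hp, hup⟩ := hR.notMem_iff.1 hu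
    have hlt := totalWeight_splitRun_lt hup (mem_N_pathGraph.1 huv)
    exact ⟨_, totalWeight_bind_splitRun_add_le (c := 1) hp hlt, _, hR.bind_splitRun v, rfl⟩
  · rintro S _ ⟨R, hR, rfl⟩ ⟨v, hv⟩
    obtain ⟨u, -, hu⟩ := mem_moves.1 hv
    obtain ⟨p, hp, hup⟩ := hR.notMem_iff.1 hu
    obtain ⟨q, hq, x, hqx, hxq, hlt⟩ :=
      exists_totalWeight_bind_splitRun_ceilDiv_lt ⟨p, hp, hup.1.trans_lt hup.2⟩
    obtain ⟨hxn, hx⟩ := (hR x).1 ⟨q, hq, hqx, hxq⟩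
    exact ⟨⟨x, hxn⟩, mem_moves_of_notMem hx, _, hlt, _, hR.bind_splitRun _, rfl⟩

lemma degree_cycleGraph_le_two (v : Fin n) : (cycleGraph n).degree v ≤ 2 := by
  match n with
  | 0 | 1 => simp
  | n + 2 => exact cycleGraph_degree_two_le.trans_le Finset.card_le_two

theorem gammaG_pathGraph (n : ℕ) : gammaG (pathGraph n) = n ⌈/⌉ 4 + n / 4 := by
  have hdeg (v : Fin n) : (pathGraph n).degree v ≤ 2 :=
    (degree_le_of_le pathGraph_le_cycleGraph).trans (degree_cycleGraph_le_two v)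
  refine le_antisymm ?_ (by
    simpa using card_ceilDiv_add_div_le_gammaG (pathGraph_preconnected n) hdeg)
  have hR : IsRunCover (∅ : Finset (Fin n)) {(0, n)} := fun y ↦ by simp
  refine (game_pathGraph_le hR).1.trans_eq ?_
  simp only [totalWeight, runWeight, Multiset.map_singleton, Multiset.sum_singleton,
    Nat.ceilDiv_eq_add_pred_div]
  omega

end Path

section Cycle

variable {n : ℕ} {u v : Fin (n + 3)}

lemma fin_sub_eq_one_iff {u v : Fin (n + 2)} :
    u - v = 1 ↔ v.1 + 1 = u.1 ∨ v = Fin.last (n + 1) ∧ u = 0 := by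
  rw [sub_eq_iff_eq_add', Fin.ext_iff, Fin.val_add_one]
  split_ifs with h
  · subst h
    simp only [true_and, Fin.ext_iff, Fin.val_last, Fin.val_zero]
    omega
  · simp only [h, false_and, or_false, eq_comm]

lemma cycleGraph_adj_iff : (cycleGraph (n + 3)).Adj u v ↔
    (pathGraph (n + 3)).Adj u v ∨ s(u, v) = s(Fin.last (n + 2), 0) := by
  rw [cycleGraph_adj, fin_sub_eq_one_iff, fin_sub_eq_one_iff, pathGraph_adj, Sym2.eq_iff]
  tauto

lemma deleteEdges_cycleGraph_last_zero :
    (cycleGraph (n + 3)).deleteEdges {s(Fin.last (n + 2), 0)} = pathGraph (n + 3) := by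
  ext u v
  rw [deleteEdges_adj, cycleGraph_adj_iff, Set.mem_singleton_iff, or_and_right, and_not_self_iff,
    or_false, and_iff_left_iff_imp, pathGraph_adj, Sym2.eq_iff]
  simp only [Fin.ext_iff, Fin.val_last, Fin.val_zero]
  omega

lemma exists_eq_mk_add_one_of_mem_edgeSet {e : Sym2 (Fin (n + 3))}
    (he : e ∈ (cycleGraph (n + 3)).edgeSet) : ∃ a, e = s(a, a + 1) := by
  induction e with
  | _ u v =>
    rw [mem_edgeSet, cycleGraph_adj, sub_eq_iff_eq_add', sub_eq_iff_eq_add'] at he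
    rcases he with rfl | rfl
    · exact ⟨v, Sym2.eq_swap⟩
    · exact ⟨u, rfl⟩

lemma nonempty_deleteEdges_cycleGraph_iso_pathGraph {e : Sym2 (Fin (n + 3))}
    (he : e ∈ (cycleGraph (n + 3)).edgeSet) :
    Nonempty ((cycleGraph (n + 3)).deleteEdges {e} ≃g pathGraph (n + 3)) := by
  obtain ⟨a, rfl⟩ := exists_eq_mk_add_one_of_mem_edgeSet he
  rw [← deleteEdges_cycleGraph_last_zero]
  refine ⟨⟨Equiv.subRight (a + 1), fun {u v} ↦ ?_⟩⟩
  have sub_eq_last_iff (w : Fin (n + 3)) : w - (a + 1) = Fin.last (n + 2) ↔ w = a := by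
    rw [sub_eq_iff_eq_add', add_assoc, add_comm 1, Fin.last_add_one, add_zero]
  simp only [Equiv.subRight_apply, deleteEdges_adj, cycleGraph_adj, sub_sub_sub_cancel_right,
    Set.mem_singleton_iff, Sym2.eq_iff, sub_eq_zero, sub_eq_last_iff]

lemma notMem_N_cycleGraph_zero :
    u ∉ N (cycleGraph (n + 3)) 0 ↔ 2 ≤ u.1 ∧ u.1 < n + 2 := by
  rw [mem_N, cycleGraph_adj_iff, pathGraph_adj, Sym2.eq_iff]
  simp only [Fin.ext_iff, Fin.val_last, Fin.val_zero, true_and]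
  omega

lemma cycleGraph_adj_iff_pathGraph_adj (hu : u ∉ N (cycleGraph (n + 3)) 0) (v : Fin (n + 3)) :
    (cycleGraph (n + 3)).Adj u v ↔ (pathGraph (n + 3)).Adj u v := by
  rw [notMem_N_cycleGraph_zero] at hu
  rw [cycleGraph_adj_iff, or_iff_left_iff_imp, Sym2.eq_iff]
  simp only [Fin.ext_iff, Fin.val_last, Fin.val_zero]
  omega

theorem gammaG_cycleGraph (n : ℕ) :
    gammaG (cycleGraph (n + 3)) = (n + 3) ⌈/⌉ 4 + (n + 3) / 4 := by
  refine le_antisymm ?_ (by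
    simpa using card_ceilDiv_add_div_le_gammaG cycleGraph_preconnected degree_cycleGraph_le_two)
  have hR : IsRunCover (N (cycleGraph (n + 3)) 0) {(2, n + 2)} := fun y ↦ by
    simp only [Multiset.mem_singleton, exists_eq_left, notMem_N_cycleGraph_zero, exists_prop]
    omega
  calc gammaG (cycleGraph (n + 3))
    _ ≤ 1 + gameS (cycleGraph (n + 3)) (N (cycleGraph (n + 3)) 0) := by
      simpa [gammaG] using gameD_le (mem_moves_of_notMem (Finset.notMem_empty (0 : Fin (n + 3))))
    _ = 1 + gameS (pathGraph (n + 3)) (N (cycleGraph (n + 3)) 0) := by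
      rw [gameS_congr fun _ hu ↦ cycleGraph_adj_iff_pathGraph_adj hu]
    _ ≤ 1 + runWeight (n + 2 - 2) ⌈/⌉ 4 := by
      simpa [totalWeight] using (game_pathGraph_le hR).2
    _ ≤ (n + 3) ⌈/⌉ 4 + (n + 3) / 4 := by
      simp only [runWeight, Nat.ceilDiv_eq_add_pred_div]
      omega

end Cycle

end DomGame

open DomGame in
/-- For `n ≥ 3`, removing any edge from the cycle `C_n` does not change the
game domination number. -/
theorem gameD_cycle_edge_removal (n : ℕ) (hn : 3 ≤ n)
    (e : Sym2 (Fin n)) (he : e ∈ (SimpleGraph.cycleGraph n).edgeSet) :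
    gammaG (SimpleGraph.cycleGraph n) =
      gammaG ((SimpleGraph.cycleGraph n).deleteEdges {e}) := by
  obtain ⟨m, rfl⟩ := Nat.exists_eq_add_of_le' hn
  obtain ⟨f⟩ := nonempty_deleteEdges_cycleGraph_iso_pathGraph he
  rw [gammaG_congr f, gammaG_cycleGraph, gammaG_pathGraph]
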